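/- arXiv:2009.14291 — 3 statements merged into one kernel-verified Lean document; each statement's English description precedes it below -/
import Mathlib

section
/- Let U ⊂ ℝ³ be open, let ω : U → ℝ³ be twice continuously differentiable, and let x ∈ U with ω(x) ≠ 0. Then the function |ω| is twice continuously differentiable in a neighborhood of x, and (ω(x)/|ω(x)|) · Δω(x) ≤ Δ(|ω|)(x), where Δ denotes the Laplacian (applied componentwise to ω) and · is the Euclidean inner product on ℝ³. -/
/-!
Write `g = |ω|`, which is `C²` near `x` because the Euclidean norm is smooth away from `0`.
Differentiating `g² = ∑ₖ ωₖ²` once and twice in a fixed coordinate direction gives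
`g ∂g = ∑ₖ ωₖ ∂ωₖ` and `(∂g)² + g ∂∂g = ∑ₖ (∂ωₖ)² + ∑ₖ ωₖ ∂∂ωₖ` at `x`. By Cauchy–Schwarz the first
identity yields `(∂g)² ≤ ∑ₖ (∂ωₖ)²`, hence `∑ₖ ωₖ ∂∂ωₖ ≤ g ∂∂g` by the second one
(`sum_mul_pd_pd_le`). Dividing by `g(x) > 0` and summing over the directions gives the claim.
-/

noncomputable section

/-- `ℝ³` with the Euclidean norm. -/
abbrev V3 := EuclideanSpace ℝ (Fin 3)

/-- Partial derivative `∂ᵢ f` of a scalar function on `ℝ³`. -/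
noncomputable def pd (i : Fin 3) (f : V3 → ℝ) (x : V3) : ℝ :=
  fderiv ℝ f x (EuclideanSpace.single i 1)

/-- The Laplacian of a scalar function on `ℝ³`. -/
noncomputable def lap3 (f : V3 → ℝ) (x : V3) : ℝ := ∑ i, pd i (fun y => pd i f y) x

theorem pd_sq {f : V3 → ℝ} {x : V3} (i : Fin 3) (hf : DifferentiableAt ℝ f x) :
    pd i (fun y => f y ^ 2) x = 2 * (f x * pd i f x) := by
  simp only [pd]
  rw [(hf.hasFDerivAt.pow 2).fderiv]
  simp
  ring

theorem pd_sum {f : Fin 3 → V3 → ℝ} {x : V3} (i : Fin 3)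
    (hf : ∀ k, DifferentiableAt ℝ (f k) x) :
    pd i (fun y => ∑ k, f k y) x = ∑ k, pd i (f k) x := by
  simp only [pd]
  rw [fderiv_fun_sum fun k _ => hf k]
  simp

theorem pd_congr {f g : V3 → ℝ} {x : V3} (i : Fin 3) (h : f =ᶠ[nhds x] g) :
    pd i f x = pd i g x := by
  simp only [pd, h.fderiv_eq]

theorem differentiableAt_pd {f : V3 → ℝ} {x : V3} (i : Fin 3) (hf : ContDiffAt ℝ 2 f x) :
    DifferentiableAt ℝ (fun y => pd i f y) x :=
  ((hf.fderiv_right (m := 1) (by norm_num)).differentiableAt one_ne_zero).clm_apply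
    (differentiableAt_const _)

theorem eventually_differentiableAt {f : V3 → ℝ} {x : V3} (hf : ContDiffAt ℝ 2 f x) :
    ∀ᶠ y in nhds x, DifferentiableAt ℝ f y :=
  (hf.eventually (by simp)).mono fun _ hy => hy.differentiableAt two_ne_zero

theorem pd_pd_sq {f : V3 → ℝ} {x : V3} (i : Fin 3) (hf : ContDiffAt ℝ 2 f x) :
    pd i (fun y => pd i (fun z => f z ^ 2) y) x =
      2 * (pd i f x ^ 2 + f x * pd i (fun y => pd i f y) x) := by
  rw [pd_congr i ((eventually_differentiableAt hf).mono fun y hy => pd_sq i hy)]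
  have h1 := (hf.differentiableAt two_ne_zero).hasFDerivAt
  have h2 := (differentiableAt_pd i hf).hasFDerivAt
  have h3 := ((h1.mul h2).const_mul 2).fderiv
  have h4 : pd i (fun y => 2 * (f y * pd i f y)) x =
      fderiv ℝ (fun y => 2 * (f y * pd i f y)) x (EuclideanSpace.single i 1) := rfl
  rw [h4]
  erw [h3]
  simp [pd]
  ring

theorem pd_pd_sum {f : Fin 3 → V3 → ℝ} {x : V3} (i : Fin 3) (hf : ∀ k, ContDiffAt ℝ 2 (f k) x) :
    pd i (fun y => pd i (fun z => ∑ k, f k z) y) x = ∑ k, pd i (fun y => pd i (f k) y) x := by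
  have h : ∀ᶠ y in nhds x, ∀ k, DifferentiableAt ℝ (f k) y :=
    Filter.eventually_all.2 fun k => eventually_differentiableAt (hf k)
  rw [pd_congr i (h.mono fun y hy => pd_sum i hy), pd_sum i fun k => differentiableAt_pd i (hf k)]

/-- The inequality in a single coordinate direction, for any positive `C²` function `g` with
`g² = ∑ₖ fₖ²`. -/
theorem sum_mul_pd_pd_le {f : Fin 3 → V3 → ℝ} {g : V3 → ℝ} {x : V3} (i : Fin 3)
    (hf : ∀ k, ContDiffAt ℝ 2 (f k) x) (hg : ContDiffAt ℝ 2 g x) (hpos : 0 < g x)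
    (h : ∀ y, g y ^ 2 = ∑ k, f k y ^ 2) :
    ∑ k, f k x * pd i (fun y => pd i (f k) y) x ≤ g x * pd i (fun y => pd i g y) x := by
  have hfun : (fun y => g y ^ 2) = fun y => ∑ k, f k y ^ 2 := funext h
  have e1 : g x * pd i g x = ∑ k, f k x * pd i (f k) x := by
    have h1 := pd_sq i (hg.differentiableAt two_ne_zero)
    rw [hfun, pd_sum (f := fun k y => f k y ^ 2) i
      fun k => ((hf k).differentiableAt two_ne_zero).pow 2] at h1
    simp only [fun k => pd_sq i ((hf k).differentiableAt two_ne_zero), ← Finset.mul_sum] at h1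
    linarith
  have e2 : pd i g x ^ 2 + g x * pd i (fun y => pd i g y) x =
      ∑ k, pd i (f k) x ^ 2 + ∑ k, f k x * pd i (fun y => pd i (f k) y) x := by
    have h1 := pd_pd_sq i hg
    rw [hfun, pd_pd_sum i fun k => (hf k).pow 2] at h1
    simp only [fun k => pd_pd_sq i (hf k), ← Finset.mul_sum, Finset.sum_add_distrib] at h1
    linarith
  have cs := Finset.sum_mul_sq_le_sq_mul_sq Finset.univ (fun k => f k x) (fun k => pd i (f k) x)
  rw [← e1, ← h x, mul_pow] at cs
  have := le_of_mul_le_mul_left cs (pow_pos hpos 2)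
  linarith

/-- If `ω : U → ℝ³` is `C²` on an open set `U` and `ω(x) ≠ 0`, then `|ω|`
is `C²` near `x` and `(ω(x)/|ω(x)|) · Δω(x) ≤ Δ|ω|(x)` (Laplacian componentwise, Euclidean
inner product and norm). -/
theorem statement11 (U : Set V3) (hU : IsOpen U) (ω : V3 → V3)
    (hω : ContDiffOn ℝ 2 ω U) (x : V3) (hx : x ∈ U) (hωx : ω x ≠ 0) :
    (∃ Vnb : Set V3, IsOpen Vnb ∧ x ∈ Vnb ∧
        ContDiffOn ℝ 2 (fun y => ‖ω y‖) Vnb) ∧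
    (∑ i, (ω x i / ‖ω x‖) * lap3 (fun y => ω y i) x) ≤ lap3 (fun y => ‖ω y‖) x := by
  have hc : ContDiffAt ℝ 2 ω x := hω.contDiffAt (hU.mem_nhds hx)
  have hg : ContDiffAt ℝ 2 (fun y => ‖ω y‖) x := hc.norm ℝ hωx
  have hk : ∀ k, ContDiffAt ℝ 2 (fun y => ω y k) x := contDiffAt_euclidean.1 hc
  have hpos : 0 < ‖ω x‖ := norm_pos_iff.2 hωx
  constructor
  · obtain ⟨u, hu, hopen, hxu⟩ := eventually_nhds_iff.1 (hg.eventually (by simp))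
    exact ⟨u, hopen, hxu, fun y hy => (hu y hy).contDiffWithinAt⟩
  · have key := fun i => sum_mul_pd_pd_le i hk hg hpos fun y => by
      simp [EuclideanSpace.norm_sq_eq]
    have hsum := Finset.sum_le_sum fun i (_ : i ∈ Finset.univ) => key i
    rw [Finset.sum_comm, ← Finset.mul_sum] at hsum
    simp only [← Finset.mul_sum] at hsum
    simp only [div_mul_eq_mul_div, ← Finset.sum_div]
    rw [div_le_iff₀ hpos, mul_comm (lap3 _ x)]
    exact hsum
end
end

section
/- Let U ⊂ ℝ³ be open, let ω : U → ℝ³ be twice continuously differentiable, let x ∈ U with ω(x) ≠ 0, let α > 0, and let e ∈ ℝ³. Write ∂ for the directional derivative along e, and for β ∈ ℝ define ω^β := |ω|^{β−1}ω on the set where ω ≠ 0. Then the functions |ω|^α and ω^{α/2} are twice continuously differentiable in a neighborhood of x, and (1/α)·∂∂(|ω|^α)(x) ≥ (4(α−1)/α²)·|∂(ω^{α/2})(x)|² + ω^{α−1}(x)·(∂∂ω)(x), where · is the Euclidean inner product and |·| the Euclidean norm on ℝ³. -/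
/-!
Write `r = |ω|`, `a = ∂ω`, `b = ∂∂ω`, `p = ω · a`. The chain rule gives
`∂(r ^ β) = β r ^ (β - 2) p` wherever `ω ≠ 0` (`hasFDerivAt_norm_comp_rpow`), so that at `x`

* `(1/α) ∂∂(r ^ α) = (α - 2) P + Q + r ^ (α - 2) ω · b`,
* `|∂(r ^ (α/2 - 1) ω)|² = (α²/4 - 1) P + Q`,

where `P = r ^ (α - 4) p²` and `Q = r ^ (α - 2) |a|²`. The difference of the two sides of the
inequality is therefore exactly `((α - 2)² / α²) (Q - P)`, and `P ≤ Q` is Cauchy–Schwarz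
`p² ≤ r² |a|²`.
-/

noncomputable section

/-- Directional derivative of a scalar function along the vector `e`. -/
noncomputable def dd (e : V3) (f : V3 → ℝ) (x : V3) : ℝ := fderiv ℝ f x e

lemma hasFDerivAt_norm_comp_rpow {ω : V3 → V3} {y : V3} {ω' : V3 →L[ℝ] V3}
    (h : HasFDerivAt ω ω' y) (h0 : ω y ≠ 0) (β : ℝ) :
    HasFDerivAt (fun z => ‖ω z‖ ^ β)
      ((β * ‖ω y‖ ^ (β - 2)) • (innerSL ℝ (ω y)).comp ω') y := by
  have hr : 0 < ‖ω y‖ := norm_pos_iff.mpr h0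
  have key := h.norm_sq.rpow_const (p := β / 2) (Or.inl (by positivity))
  have hpow : ∀ (t γ : ℝ), 0 ≤ t → (t ^ 2) ^ (γ / 2) = t ^ γ := by
    intro t γ ht
    rw [← Real.rpow_natCast, ← Real.rpow_mul ht]
    congr 1
    push_cast
    ring
  have h2 : (‖ω y‖ ^ 2) ^ (β / 2 - 1) = ‖ω y‖ ^ (β - 2) := by
    rw [← hpow _ _ hr.le]
    congr 1
    ring
  simp only [hpow _ _ (norm_nonneg _), h2] at key
  refine key.congr_fderiv ?_
  ext v
  simp
  ring

/-- The pointwise inequality at `w = ω x`, `a = ∂ω x`, `b = ∂∂ω x`. It is applied with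
`s = r ^ (α / 2 - 3)`, so that the real powers `r ^ (α / 2 - 1)`, `r ^ (α - 4)`, `r ^ (α - 2)` become
`s * r ^ 2`, `s ^ 2 * r ^ 2`, `s ^ 2 * r ^ 4`. -/
lemma core_ineq {w a b : V3} {r α s : ℝ} (hα : 0 < α) (hr : r = ‖w‖) :
    (α - 2) * s ^ 2 * r ^ 2 * (inner ℝ w a) ^ 2
        + s ^ 2 * r ^ 4 * (‖a‖ ^ 2 + inner ℝ w b) ≥
      (4 * (α - 1) / α ^ 2) *
        ‖((α / 2 - 1) * s * inner ℝ w a) • w + (s * r ^ 2) • a‖ ^ 2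
      + s ^ 2 * r ^ 4 * inner ℝ w b := by
  have hcs : (inner ℝ w a) ^ 2 ≤ r ^ 2 * ‖a‖ ^ 2 := by
    rw [← mul_pow, hr, ← sq_abs]
    gcongr
    exact abs_real_inner_le_norm w a
  have hsq : ‖((α / 2 - 1) * s * inner ℝ w a) • w + (s * r ^ 2) • a‖ ^ 2
      = (α ^ 2 / 4 - 1) * s ^ 2 * r ^ 2 * (inner ℝ w a) ^ 2 + s ^ 2 * r ^ 4 * ‖a‖ ^ 2 := by
    rw [norm_add_sq_real, norm_smul, norm_smul, mul_pow, mul_pow, inner_smul_left,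
      inner_smul_right, Real.norm_eq_abs, Real.norm_eq_abs, sq_abs, sq_abs, ← hr]
    simp
    ring
  rw [hsq, ge_iff_le, ← sub_nonneg]
  have hnn : 0 ≤ ((α - 2) ^ 2 / α ^ 2) * (s ^ 2 * r ^ 2) *
      (r ^ 2 * ‖a‖ ^ 2 - (inner ℝ w a) ^ 2) :=
    mul_nonneg (by positivity) (sub_nonneg.mpr hcs)
  convert hnn using 1
  field_simp
  ring

/-- Let `ω : U → ℝ³` be `C²` on an open set `U`, `ω(x) ≠ 0`, `α > 0`, and
let `∂` be the directional derivative along `e`. With `ω^β := |ω|^{β−1} ω`, the functions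
`|ω|^α` and `ω^{α/2}` are `C²` near `x` and
`(1/α) ∂∂(|ω|^α)(x) ≥ (4(α−1)/α²) |∂(ω^{α/2})(x)|² + ω^{α−1}(x) · ∂∂ω(x)`. -/
theorem statement12 (U : Set V3) (hU : IsOpen U) (ω : V3 → V3)
    (hω : ContDiffOn ℝ 2 ω U) (x : V3) (hx : x ∈ U) (hωx : ω x ≠ 0)
    (α : ℝ) (hα : 0 < α) (e : V3) :
    (∃ Vnb : Set V3, IsOpen Vnb ∧ x ∈ Vnb ∧
        ContDiffOn ℝ 2 (fun y => ‖ω y‖ ^ α) Vnb ∧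
        ContDiffOn ℝ 2 (fun y => (fun i => ‖ω y‖ ^ (α / 2 - 1) * ω y i : Fin 3 → ℝ)) Vnb) ∧
    (1 / α) * dd e (fun y => dd e (fun z => ‖ω z‖ ^ α) y) x ≥
      (4 * (α - 1) / α ^ 2) *
        (∑ i, (dd e (fun y => ‖ω y‖ ^ (α / 2 - 1) * ω y i) x) ^ 2) +
      ∑ i, (‖ω x‖ ^ (α - 2) * ω x i) * dd e (fun y => dd e (fun z => ω z i) y) x := by
  have hWo : IsOpen (U ∩ ω ⁻¹' {0}ᶜ) :=
    hω.continuousOn.isOpen_inter_preimage hU isOpen_compl_singleton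
  have hxW : x ∈ U ∩ ω ⁻¹' {0}ᶜ := ⟨hx, hωx⟩
  have hωW := hω.mono (Set.inter_subset_left (t := ω ⁻¹' {0}ᶜ))
  have hne : ∀ y ∈ U ∩ ω ⁻¹' {0}ᶜ, ω y ≠ 0 := fun y hy => hy.2
  have hpowW : ∀ β : ℝ, ContDiffOn ℝ 2 (fun y => ‖ω y‖ ^ β) (U ∩ ω ⁻¹' {0}ᶜ) := fun β =>
    (hωW.norm ℝ hne).rpow_const_of_ne (fun y hy => norm_ne_zero_iff.mpr (hne y hy))
  refine ⟨⟨_, hWo, hxW, hpowW α, ?_⟩, ?_⟩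
  · rw [contDiffOn_pi]
    intro i
    exact (hpowW _).mul ((contDiffOn_euclidean.mp hωW) i)
  have hd : ∀ y ∈ U, HasFDerivAt ω (fderiv ℝ ω y) y := fun y hy =>
    ((hω.contDiffAt (hU.mem_nhds hy)).differentiableAt (by norm_num)).hasFDerivAt
  have hdi : ∀ y ∈ U, ∀ i, HasFDerivAt (fun z => ω z i)
      ((EuclideanSpace.proj i : V3 →L[ℝ] ℝ).comp (fderiv ℝ ω y)) y := fun y hy i =>
    (EuclideanSpace.proj i : V3 →L[ℝ] ℝ).hasFDerivAt.comp y (hd y hy)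
  -- `a = ∂ω`, which is itself differentiable at `x`
  set a : V3 → V3 := fun y => fderiv ℝ ω y e with ha
  have had : DifferentiableAt ℝ a x := by
    have h1 : ContDiffAt ℝ 1 (fderiv ℝ ω) x :=
      (hω.contDiffAt (hU.mem_nhds hx)).fderiv_right (by norm_num)
    exact (h1.differentiableAt (by norm_num)).clm_apply (differentiableAt_const e)
  have hax := had.hasFDerivAt
  have hωxd := hd x hx
  set b : V3 := fderiv ℝ a x e with hb
  have hr : 0 < ‖ω x‖ := norm_pos_iff.mpr hωx
  have e1 : ∀ i, dd e (fun y => dd e (fun z => ω z i) y) x = b i := by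
    intro i
    have hev : (fun y => dd e (fun z => ω z i) y) =ᶠ[nhds x] fun y => a y i := by
      filter_upwards [hU.mem_nhds hx] with y hy
      simp [dd, (hdi y hy i).fderiv, ha]
    have h2 := (EuclideanSpace.proj i : V3 →L[ℝ] ℝ).hasFDerivAt.comp x hax
    rw [dd, hev.fderiv_eq]
    exact congrArg (fun L => L e) h2.fderiv
  have e2 : dd e (fun y => dd e (fun z => ‖ω z‖ ^ α) y) x =
      α * ((α - 2) * ‖ω x‖ ^ (α - 4) * (inner ℝ (ω x) (a x)) ^ 2
        + ‖ω x‖ ^ (α - 2) * (‖a x‖ ^ 2 + inner ℝ (ω x) b)) := by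
    have hev : (fun y => dd e (fun z => ‖ω z‖ ^ α) y) =ᶠ[nhds x]
        fun y => α * (‖ω y‖ ^ (α - 2) * inner ℝ (ω y) (a y)) := by
      filter_upwards [hWo.mem_nhds hxW] with y hy
      simp [dd, (hasFDerivAt_norm_comp_rpow (hd y hy.1) hy.2 α).fderiv, ha, mul_assoc]
    have h2 := ((hasFDerivAt_norm_comp_rpow hωxd hωx (α - 2)).mul (hωxd.inner ℝ hax)).const_mul α
    rw [dd, hev.fderiv_eq]
    refine (congrArg (fun L => L e) h2.fderiv).trans ?_
    have h4 : α - 2 - 2 = α - 4 := by ring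
    have h5 : inner ℝ (a x) (a x) = ‖a x‖ ^ 2 := real_inner_self_eq_norm_sq _
    simp [h4, ← hb]
    simp only [ha] at h5 ⊢
    rw [← h5]
    ring
  have e3 : ∀ i, dd e (fun y => ‖ω y‖ ^ (α / 2 - 1) * ω y i) x =
      (((α / 2 - 1) * ‖ω x‖ ^ (α / 2 - 3) * inner ℝ (ω x) (a x)) • ω x
        + (‖ω x‖ ^ (α / 2 - 1)) • a x) i := by
    intro i
    have h2 := (hasFDerivAt_norm_comp_rpow hωxd hωx (α / 2 - 1)).mul (hdi x hx i)
    refine (congrArg (fun L => L e) h2.fderiv).trans ?_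
    have h4 : α / 2 - 1 - 2 = α / 2 - 3 := by ring
    simp [h4, ha]
    ring
  -- all powers of `|ω x|` in terms of `s = |ω x| ^ (α / 2 - 3)`
  have p1 : ‖ω x‖ ^ (α / 2 - 1) = ‖ω x‖ ^ (α / 2 - 3) * ‖ω x‖ ^ 2 := by
    rw [← Real.rpow_natCast, ← Real.rpow_add hr]
    congr 1
    push_cast
    ring
  have p2 : ‖ω x‖ ^ (α - 4) = (‖ω x‖ ^ (α / 2 - 3)) ^ 2 * ‖ω x‖ ^ 2 := by
    rw [← Real.rpow_natCast, ← Real.rpow_natCast, ← Real.rpow_mul hr.le, ← Real.rpow_add hr]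
    congr 1
    push_cast
    ring
  have p3 : ‖ω x‖ ^ (α - 2) = (‖ω x‖ ^ (α / 2 - 3)) ^ 2 * ‖ω x‖ ^ 4 := by
    rw [← Real.rpow_natCast, ← Real.rpow_natCast, ← Real.rpow_mul hr.le, ← Real.rpow_add hr]
    congr 1
    push_cast
    ring
  have e4 : ∑ i, (‖ω x‖ ^ (α - 2) * ω x i) * b i = ‖ω x‖ ^ (α - 2) * inner ℝ (ω x) b := by
    rw [PiLp.inner_apply, Finset.mul_sum]
    refine Finset.sum_congr rfl fun i _ => ?_
    simp
    ring
  simp only [e1, e2, e3]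
  rw [e4, ← EuclideanSpace.real_norm_sq_eq, p1, p2, p3, one_div, inv_mul_cancel_left₀ hα.ne']
  have := core_ineq (a := a x) (b := b) (s := ‖ω x‖ ^ (α / 2 - 3)) hα (rfl : ‖ω x‖ = ‖ω x‖)
  simpa only [mul_assoc] using this
end
end

section
/- Let (S,μ) and (Y,λ) be σ-finite measure spaces, let f : S×Y → ℝ be measurable, let p₀, p₁, q₀, q₁ ∈ [1,∞], let θ ∈ [0,1], and define p, q by 1/p = θ/p₀ + (1−θ)/p₁ and 1/q = θ/q₀ + (1−θ)/q₁ (with the convention 1/∞ = 0). Then ‖f‖_{L^p_t L^q_x} ≤ ‖f‖_{L^{p₀}_t L^{q₀}_x}^{θ} · ‖f‖_{L^{p₁}_t L^{q₁}_x}^{1−θ}, where ‖f‖_{L^p_t L^q_x} := ‖ t ↦ ‖f(t,·)‖_{L^q(Y,λ)} ‖_{L^p(S,μ)} (interpreted in the extended nonnegative reals, with 0·∞ = 0 on the right-hand side). -/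
/-!
Hölder's inequality in the geometric form
`‖g₀ ^ θ * g₁ ^ (1 - θ)‖_p ≤ ‖g₀‖_{p₀} ^ θ * ‖g₁‖_{p₁} ^ (1 - θ)` (`pNormE_geom_le`) is used twice.
In the inner variable, with `g₀ = g₁ = |f (t, ·)|`, it gives
`‖f(t,·)‖_q ≤ ‖f(t,·)‖_{q₀} ^ θ * ‖f(t,·)‖_{q₁} ^ (1 - θ)` for every `t`. In the outer variable it is
applied to the two inner norms `t ↦ ‖f(t,·)‖_{q₀}` and `t ↦ ‖f(t,·)‖_{q₁}`, which are measurable by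
`measurable_inner_pNormE`; this is where σ-finiteness of the inner measure enters.
-/

open MeasureTheory Set
open scoped ENNReal NNReal

noncomputable section

/-- The `L^p` norm (valued in `ℝ≥0∞`) of an `ℝ≥0∞`-valued function, with the
essential-supremum convention when `p = ∞`. -/
def pNormE {X : Type*} [MeasurableSpace X] (μ : Measure X) (g : X → ℝ≥0∞) (p : ℝ≥0∞) :
    ℝ≥0∞ :=
  if p = ∞ then essSup g μ else (∫⁻ x, g x ^ p.toReal ∂μ) ^ (1 / p.toReal)

/-- The mixed norm `‖f‖_{L^p_t L^q_x}`: first the `L^q` norm in the second variable, then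
the `L^p` norm in the first variable. -/
def mixedN {S Y : Type*} [MeasurableSpace S] [MeasurableSpace Y]
    (μ : Measure S) (lam : Measure Y) (f : S × Y → ℝ) (p q : ℝ≥0∞) : ℝ≥0∞ :=
  pNormE μ (fun t => pNormE lam (fun y => ENNReal.ofReal |f (t, y)|) q) p

lemma pNormE_mono {X : Type*} [MeasurableSpace X] (μ : Measure X) {g h : X → ℝ≥0∞}
    (hgh : ∀ x, g x ≤ h x) (p : ℝ≥0∞) : pNormE μ g p ≤ pNormE μ h p := by
  unfold pNormE
  split_ifs
  · exact essSup_mono_ae (Filter.Eventually.of_forall hgh)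
  · gcongr with x
    exact hgh x

lemma pNormE_geom_le_of_ne_top {X : Type*} [MeasurableSpace X] (μ : Measure X)
    {g₀ g₁ : X → ℝ≥0∞} (h₀ : Measurable g₀) (h₁ : Measurable g₁) {r r₀ r₁ θ : ℝ}
    (hr : 0 < r) (hr₀ : 0 < r₀) (hr₁ : 0 < r₁) (hθ0 : 0 ≤ θ) (hθ1 : θ ≤ 1)
    (h : r⁻¹ = θ * r₀⁻¹ + (1 - θ) * r₁⁻¹) :
    (∫⁻ x, (g₀ x ^ θ * g₁ x ^ (1 - θ)) ^ r ∂μ) ^ (1 / r) ≤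
      ((∫⁻ x, g₀ x ^ r₀ ∂μ) ^ (1 / r₀)) ^ θ * ((∫⁻ x, g₁ x ^ r₁ ∂μ) ^ (1 / r₁)) ^ (1 - θ) := by
  have hθ' : 0 ≤ 1 - θ := by linarith
  -- Hölder with the exponents `a = θ r / r₀` and `b = (1 - θ) r / r₁`, which sum to `1`.
  have hab : θ * r / r₀ + (1 - θ) * r / r₁ = 1 := by
    have : r * r⁻¹ = 1 := mul_inv_cancel₀ hr.ne'
    rw [h] at this
    calc _ = r * (θ * r₀⁻¹ + (1 - θ) * r₁⁻¹) := by ring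
      _ = 1 := this
  have key := ENNReal.lintegral_mul_norm_pow_le (μ := μ) (h₀.pow_const r₀).aemeasurable
    (h₁.pow_const r₁).aemeasurable (p := θ * r / r₀) (q := (1 - θ) * r / r₁)
    (by positivity) (by positivity) hab
  have e : ∀ x, (g₀ x ^ θ * g₁ x ^ (1 - θ)) ^ r
      = (g₀ x ^ r₀) ^ (θ * r / r₀) * (g₁ x ^ r₁) ^ ((1 - θ) * r / r₁) := by
    intro x
    rw [ENNReal.mul_rpow_of_nonneg _ _ hr.le]
    simp only [← ENNReal.rpow_mul]
    congr 2 <;> field_simp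
  simp only [e]
  refine (ENNReal.rpow_le_rpow key (by positivity)).trans_eq ?_
  rw [ENNReal.mul_rpow_of_nonneg _ _ (by positivity)]
  simp only [← ENNReal.rpow_mul]
  congr 2 <;> field_simp

lemma essSup_rpow_le {X : Type*} [MeasurableSpace X] (μ : Measure X) (g : X → ℝ≥0∞) {θ : ℝ}
    (hθ : 0 ≤ θ) : ∀ᵐ x ∂μ, g x ^ θ ≤ essSup g μ ^ θ := by
  filter_upwards [ENNReal.ae_le_essSup g] with x hx
  exact ENNReal.rpow_le_rpow hx hθ

/-- Hölder's inequality when exactly one of the two exponents is infinite. -/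
lemma pNormE_geom_le_of_top {X : Type*} [MeasurableSpace X] (μ : Measure X)
    (g₀ : X → ℝ≥0∞) {g₁ : X → ℝ≥0∞} (h₁ : Measurable g₁) {r r₁ θ : ℝ}
    (hr : 0 < r) (hr₁ : 0 < r₁) (hθ0 : 0 ≤ θ)
    (h : r⁻¹ = (1 - θ) * r₁⁻¹) :
    (∫⁻ x, (g₀ x ^ θ * g₁ x ^ (1 - θ)) ^ r ∂μ) ^ (1 / r) ≤
      (essSup g₀ μ) ^ θ * ((∫⁻ x, g₁ x ^ r₁ ∂μ) ^ (1 / r₁)) ^ (1 - θ) := by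
  have hr₁' : (1 - θ) * r = r₁ := by
    have : r⁻¹ * r * r₁ = r₁ := by rw [inv_mul_cancel₀ hr.ne', one_mul]
    rw [h] at this
    field_simp at this
    linarith
  calc (∫⁻ x, (g₀ x ^ θ * g₁ x ^ (1 - θ)) ^ r ∂μ) ^ (1 / r)
      ≤ (∫⁻ x, (essSup g₀ μ ^ θ) ^ r * g₁ x ^ r₁ ∂μ) ^ (1 / r) := by
        refine ENNReal.rpow_le_rpow (lintegral_mono_ae ?_) (by positivity)
        filter_upwards [essSup_rpow_le μ g₀ hθ0] with x hx
        rw [ENNReal.mul_rpow_of_nonneg _ _ hr.le, ← ENNReal.rpow_mul (g₁ x), hr₁']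
        gcongr
    _ = (essSup g₀ μ) ^ θ * ((∫⁻ x, g₁ x ^ r₁ ∂μ) ^ (1 / r₁)) ^ (1 - θ) := by
        rw [lintegral_const_mul _ (h₁.pow_const _), ENNReal.mul_rpow_of_nonneg _ _ (by positivity)]
        simp only [← ENNReal.rpow_mul]
        congr 2
        · field_simp
        · rw [one_div, h]; ring

/-- Hölder's inequality for weighted geometric means, for all exponents in `[1, ∞]`. -/
lemma pNormE_geom_le {X : Type*} [MeasurableSpace X] (μ : Measure X)
    {g₀ g₁ : X → ℝ≥0∞} (h₀ : Measurable g₀) (h₁ : Measurable g₁)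
    {p p₀ p₁ : ℝ≥0∞} {θ : ℝ} (hp₀ : 1 ≤ p₀) (hp₁ : 1 ≤ p₁) (hθ0 : 0 < θ) (hθ1 : θ < 1)
    (hp : p⁻¹ = ENNReal.ofReal θ * p₀⁻¹ + ENNReal.ofReal (1 - θ) * p₁⁻¹) :
    pNormE μ (fun x => g₀ x ^ θ * g₁ x ^ (1 - θ)) p ≤
      pNormE μ g₀ p₀ ^ θ * pNormE μ g₁ p₁ ^ (1 - θ) := by
  have hθ' : 0 < 1 - θ := by linarith
  have i₀ : p₀⁻¹ ≠ ∞ := ENNReal.inv_ne_top.2 (zero_lt_one.trans_le hp₀).ne'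
  have i₁ : p₁⁻¹ ≠ ∞ := ENNReal.inv_ne_top.2 (zero_lt_one.trans_le hp₁).ne'
  have hpinv : p⁻¹ ≠ ∞ := by
    rw [hp]
    exact ENNReal.add_ne_top.2
      ⟨ENNReal.mul_ne_top ENNReal.ofReal_ne_top i₀, ENNReal.mul_ne_top ENNReal.ofReal_ne_top i₁⟩
  have hp_zero : p ≠ 0 := ENNReal.inv_ne_top.1 hpinv
  have hreal : p.toReal⁻¹ = θ * p₀.toReal⁻¹ + (1 - θ) * p₁.toReal⁻¹ := by
    have := congrArg ENNReal.toReal hp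
    rwa [ENNReal.toReal_add (ENNReal.mul_ne_top ENNReal.ofReal_ne_top i₀)
      (ENNReal.mul_ne_top ENNReal.ofReal_ne_top i₁), ENNReal.toReal_mul, ENNReal.toReal_mul,
      ENNReal.toReal_inv, ENNReal.toReal_inv, ENNReal.toReal_inv,
      ENNReal.toReal_ofReal hθ0.le, ENNReal.toReal_ofReal hθ'.le] at this
  have htop : p = ∞ ↔ p₀ = ∞ ∧ p₁ = ∞ := by
    rw [← ENNReal.inv_eq_zero, hp, add_eq_zero, mul_eq_zero, mul_eq_zero]
    simp [hθ0.not_ge, hθ1.not_ge]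
  have pos : ∀ {s : ℝ≥0∞}, 1 ≤ s → s ≠ ∞ → 0 < s.toReal := fun hs hs' =>
    ENNReal.toReal_pos (zero_lt_one.trans_le hs).ne' hs'
  unfold pNormE
  by_cases t₀ : p₀ = ∞ <;> by_cases t₁ : p₁ = ∞
  · rw [if_pos (htop.2 ⟨t₀, t₁⟩), if_pos t₀, if_pos t₁]
    refine essSup_le_of_ae_le _ ?_
    filter_upwards [essSup_rpow_le μ g₀ hθ0.le, essSup_rpow_le μ g₁ hθ'.le] with x hx hx'
    exact mul_le_mul' hx hx'
  · have t : p ≠ ∞ := fun t => t₁ (htop.1 t).2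
    rw [if_neg t, if_pos t₀, if_neg t₁]
    refine pNormE_geom_le_of_top μ g₀ h₁ (ENNReal.toReal_pos hp_zero t) (pos hp₁ t₁) hθ0.le ?_
    simpa [t₀] using hreal
  · have t : p ≠ ∞ := fun t => t₀ (htop.1 t).1
    rw [if_neg t, if_neg t₀, if_pos t₁]
    have := pNormE_geom_le_of_top μ g₁ h₀ (θ := 1 - θ) (ENNReal.toReal_pos hp_zero t)
      (pos hp₀ t₀) hθ'.le (by simpa [t₁] using hreal)
    simpa only [sub_sub_cancel, mul_comm] using this
  · have t : p ≠ ∞ := fun t => t₀ (htop.1 t).1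
    rw [if_neg t, if_neg t₀, if_neg t₁]
    exact pNormE_geom_le_of_ne_top μ h₀ h₁ (ENNReal.toReal_pos hp_zero t) (pos hp₀ t₀)
      (pos hp₁ t₁) hθ0.le hθ1.le hreal

/-- For the essential supremum, the sublevel set at `c` is the set of `t` whose section of
`{g > c}` is null, and measures of sections depend measurably on `t`. -/
lemma measurable_inner_pNormE {S Y : Type*} [MeasurableSpace S] [MeasurableSpace Y]
    (lam : Measure Y) [SigmaFinite lam] {g : S × Y → ℝ≥0∞} (hg : Measurable g) (q : ℝ≥0∞) :
    Measurable fun t => pNormE lam (fun y => g (t, y)) q := by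
  unfold pNormE
  split_ifs
  · refine measurable_of_Iic fun c => ?_
    have : (fun t => essSup (fun y => g (t, y)) lam) ⁻¹' Iic c
        = (fun t => lam (Prod.mk t ⁻¹' (g ⁻¹' Ioi c))) ⁻¹' {0} := by
      ext t
      simp only [mem_preimage, mem_Iic, mem_singleton_iff]
      constructor
      · intro h
        refine measure_mono_null (fun y hy => ?_)
          (ae_iff.1 (ENNReal.ae_le_essSup (μ := lam) fun y => g (t, y)))
        exact not_le.2 (h.trans_lt hy)
      · intro h
        refine essSup_le_of_ae_le c (ae_iff.2 ?_)
        simpa [preimage, not_le] using h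
    rw [this]
    exact measurable_measure_prodMk_left (hg measurableSet_Ioi) (measurableSet_singleton 0)
  · exact ((hg.pow_const _).lintegral_prod_right').pow_const _

/-- Interpolation inequality for mixed norms:
`‖f‖_{L^p_t L^q_x} ≤ ‖f‖_{L^{p₀}_t L^{q₀}_x}^θ ‖f‖_{L^{p₁}_t L^{q₁}_x}^{1−θ}` when
`1/p = θ/p₀ + (1−θ)/p₁` and `1/q = θ/q₀ + (1−θ)/q₁` (convention `1/∞ = 0`, `0·∞ = 0`). -/
theorem statement13 {S Y : Type*} [MeasurableSpace S] [MeasurableSpace Y]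
    (μ : Measure S) (lam : Measure Y) [SigmaFinite μ] [SigmaFinite lam]
    (f : S × Y → ℝ) (hf : Measurable f)
    (p₀ p₁ q₀ q₁ p q : ℝ≥0∞) (θ : ℝ)
    (hp₀ : 1 ≤ p₀) (hp₁ : 1 ≤ p₁) (hq₀ : 1 ≤ q₀) (hq₁ : 1 ≤ q₁)
    (hθ0 : 0 ≤ θ) (hθ1 : θ ≤ 1)
    (hp : p⁻¹ = ENNReal.ofReal θ * p₀⁻¹ + ENNReal.ofReal (1 - θ) * p₁⁻¹)
    (hq : q⁻¹ = ENNReal.ofReal θ * q₀⁻¹ + ENNReal.ofReal (1 - θ) * q₁⁻¹) :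
    mixedN μ lam f p q ≤
      mixedN μ lam f p₀ q₀ ^ θ * mixedN μ lam f p₁ q₁ ^ (1 - θ) := by
  rcases hθ0.eq_or_lt with rfl | hθ0'
  · have : p = p₁ := by simpa using hp
    have : q = q₁ := by simpa using hq
    subst p q
    simp
  rcases hθ1.eq_or_lt with rfl | hθ1'
  · have : p = p₀ := by simpa using hp
    have : q = q₀ := by simpa using hq
    subst p q
    simp
  have hg : Measurable fun z => ENNReal.ofReal |f z| := hf.abs.ennreal_ofReal
  refine le_trans (pNormE_mono μ (fun t => ?_) p)
    (pNormE_geom_le μ (measurable_inner_pNormE lam hg q₀) (measurable_inner_pNormE lam hg q₁)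
      hp₀ hp₁ hθ0' hθ1' hp)
  have hgt : Measurable fun y => ENNReal.ofReal |f (t, y)| := hg.comp measurable_prodMk_left
  refine le_trans (pNormE_mono lam (fun y => ?_) q) (pNormE_geom_le lam hgt hgt hq₀ hq₁ hθ0' hθ1' hq)
  rw [← ENNReal.rpow_add_of_nonneg _ _ hθ0 (by linarith)]
  simp
end
end
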